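/- (Full general Pietsch Domination Theorem.) Let t, r ∈ ℕ; for j = 1, …, t let K_j be a compact Hausdorff topological space and G_j a Banach space, and for l = 1, …, r let E_l be a nonempty set. Let S : (E₁×⋯×E_r) × (G₁×⋯×G_t) → [0,∞) and, for each j, R_j : K_j × (E₁×⋯×E_r) × G_j → [0,∞) be maps such that: (i) for every x = (x^{(1)}, …, x^{(r)}) and every b ∈ G_j, the map φ ↦ R_j(φ, x, b) is continuous on K_j; (ii) R_j(φ, x, ηb) ≤ η R_j(φ, x, b) for all 0 ≤ η ≤ 1, and S(x, α₁b^{(1)}, …, α_t b^{(t)}) ≥ α₁⋯α_t S(x, b^{(1)}, …, b^{(t)}) for all 0 ≤ α₁, …, α_t ≤ 1. Let 0 < p₁, …, p_t < ∞ and define p by 1/p = 1/p₁ + ⋯ + 1/p_t. Then the following are equivalent: (a) there is a constant C > 0 such that (Σ_{i=1}^m S(x_i, b_i^{(1)}, …, b_i^{(t)})^p)^{1/p} ≤ C · ∏_{k=1}^t sup_{φ∈K_k} (Σ_{i=1}^m R_k(φ, x_i, b_i^{(k)})^{p_k})^{1/p_k} for every m ∈ ℕ and all x_i ∈ E₁×⋯×E_r,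 b_i^{(k)} ∈ G_k; (b) there are a constant C > 0 and Borel probability measures μ_j on K_j (j = 1, …, t) such that S(x, b^{(1)}, …, b^{(t)}) ≤ C · ∏_{j=1}^t (∫_{K_j} R_j(φ, x, b^{(j)})^{p_j} dμ_j(φ))^{1/p_j} for all x ∈ E₁×⋯×E_r and all b^{(j)} ∈ G_j. -/

import Mathlib

open scoped BigOperators
open MeasureTheory

/-!
Raising `S` and `R j` to the powers `p₀` and `p j` makes all exponents `1` and turns the product
into a geometric mean with weights `w j = p₀ / p j`. By AM-GM, the summing inequality bounds a
finite sum of values of `S ^ p₀` by an arithmetic mean, so the sum of the corresponding defects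
`S ^ p₀ - C ^ p₀ * ∑ j, w j * R j ^ p j`, continuous functions on `∏ j, K j`, is nonpositive at
some point. Since convex coefficients can be absorbed by homogeneity, this holds throughout the
convex hull of the defects, which the Hahn-Banach theorem therefore separates from the open cone of
positive functions; by Riesz representation, a probability measure on `∏ j, K j` has nonpositive
integral against every defect. Its marginals give the domination with an arithmetic mean, and
rescaling each vector separately, towards the equality case of AM-GM, recovers the geometric mean.
The converse is Hölder's inequality.
-/

section WeightedMeans

variable {ι : Type*} [Fintype ι] {w : ι → ℝ}

lemma sum_prod_rpow_le_prod_sum_rpow {κ : Type*} [Fintype κ] (hw : ∀ k, 0 ≤ w k)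
    (hw1 : ∑ k, w k = 1) {a : κ → ι → ℝ} (ha : ∀ i k, 0 ≤ a i k) :
    ∑ i, ∏ k, a i k ^ w k ≤ ∏ k, (∑ i, a i k) ^ w k := by
  have hsum_nonneg : ∀ k, 0 ≤ ∑ i, a i k := fun k => Finset.sum_nonneg fun i _ => ha i k
  by_cases hpos : ∀ k, w k ≠ 0 → 0 < ∑ i, a i k
  · have hprod_pos : 0 < ∏ k, (∑ i, a i k) ^ w k :=
      Finset.prod_pos fun k _ => by
        rcases eq_or_ne (w k) 0 with hk | hk
        · rw [hk, Real.rpow_zero]; exact one_pos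
        · exact Real.rpow_pos_of_pos (hpos k hk) _
    have am_gm : ∀ i, (∏ k, a i k ^ w k) / ∏ k, (∑ j, a j k) ^ w k ≤
        ∑ k, w k * (a i k / ∑ j, a j k) := fun i => by
      simpa only [Real.div_rpow (ha i _) (hsum_nonneg _), Finset.prod_div_distrib] using
        Real.geom_mean_le_arith_mean_weighted Finset.univ w (fun k => a i k / ∑ j, a j k)
          (fun k _ => hw k) hw1 (fun k _ => div_nonneg (ha i k) (hsum_nonneg k))
    have normalized : ∑ i, ∑ k, w k * (a i k / ∑ j, a j k) = 1 := by
      rw [Finset.sum_comm, ← hw1]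
      refine Finset.sum_congr rfl fun k _ => ?_
      rw [← Finset.mul_sum, ← Finset.sum_div]
      rcases eq_or_ne (w k) 0 with hk | hk
      · rw [hk, zero_mul]
      · rw [div_self (hpos k hk).ne', mul_one]
    rw [← div_le_one hprod_pos, Finset.sum_div, ← normalized]
    exact Finset.sum_le_sum fun i _ => am_gm i
  · push Not at hpos
    obtain ⟨k, hwk, hk⟩ := hpos
    have ha0 : ∀ i, a i k = 0 := fun i =>
      (Finset.sum_eq_zero_iff_of_nonneg fun i _ => ha i k).1 (hk.antisymm (hsum_nonneg k)) i
        (Finset.mem_univ i)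
    rw [Finset.sum_eq_zero fun i _ => Finset.prod_eq_zero (Finset.mem_univ k)
      (by rw [ha0, Real.zero_rpow hwk])]
    exact Finset.prod_nonneg fun k _ => Real.rpow_nonneg (hsum_nonneg k) _

-- The weights `β k = ε / (a k + ε)` nearly equalize the `β k * a k`, where AM-GM is sharp.
lemma le_mul_prod_rpow_of_forall_prod_rpow_mul_le (hw : ∀ k, 0 ≤ w k) (hw1 : ∑ k, w k = 1)
    {s D : ℝ} (hD : 0 ≤ D) {a : ι → ℝ} (ha : ∀ k, 0 ≤ a k)
    (h : ∀ β : ι → ℝ, (∀ k, β k ∈ Set.Icc 0 1) →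
      (∏ k, β k ^ w k) * s ≤ D * ∑ k, w k * (β k * a k)) :
    s ≤ D * ∏ k, a k ^ w k := by
  have perturbed : ∀ ε : ℝ, 0 < ε → s ≤ D * ∏ k, (a k + ε) ^ w k := fun ε hε => by
    have hpos : ∀ k, 0 < a k + ε := fun k => add_pos_of_nonneg_of_pos (ha k) hε
    have hprod_pos : 0 < ∏ k, (a k + ε) ^ w k :=
      Finset.prod_pos fun k _ => Real.rpow_pos_of_pos (hpos k) _
    have geom : ∏ k, (ε / (a k + ε)) ^ w k = ε / ∏ k, (a k + ε) ^ w k := by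
      simp only [Real.div_rpow hε.le (hpos _).le, Finset.prod_div_distrib]
      rw [← Real.rpow_sum_of_pos hε, hw1, Real.rpow_one]
    have arith : ∑ k, w k * (ε / (a k + ε) * a k) ≤ ε := by
      calc ∑ k, w k * (ε / (a k + ε) * a k) ≤ ∑ k, w k * ε := by
            refine Finset.sum_le_sum fun k _ => mul_le_mul_of_nonneg_left ?_ (hw k)
            rw [div_mul_eq_mul_div, div_le_iff₀ (hpos k)]
            exact mul_le_mul_of_nonneg_left (le_add_of_nonneg_right hε.le) hε.le
        _ = ε := by rw [← Finset.sum_mul, hw1, one_mul]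
    have hβ := h (fun k => ε / (a k + ε)) fun k =>
      ⟨(div_pos hε (hpos k)).le, (div_le_one (hpos k)).2 (le_add_of_nonneg_left (ha k))⟩
    rw [geom, div_mul_eq_mul_div, div_le_iff₀ hprod_pos] at hβ
    refine le_of_mul_le_mul_left ?_ hε
    calc ε * s ≤ D * (∑ k, w k * (ε / (a k + ε) * a k)) * ∏ k, (a k + ε) ^ w k := hβ
      _ ≤ D * ε * ∏ k, (a k + ε) ^ w k :=
        mul_le_mul_of_nonneg_right (mul_le_mul_of_nonneg_left arith hD) hprod_pos.le
      _ = ε * (D * ∏ k, (a k + ε) ^ w k) := by ring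
  have hcont : Continuous fun ε : ℝ => D * ∏ k, (a k + ε) ^ w k :=
    continuous_const.mul <| continuous_finsetProd _ fun k _ =>
      (continuous_const.add continuous_id).rpow_const fun _ => Or.inr (hw k)
  have hlim : Filter.Tendsto (fun ε : ℝ => D * ∏ k, (a k + ε) ^ w k) (nhdsWithin 0 (Set.Ioi 0))
      (nhds (D * ∏ k, a k ^ w k)) := by
    simpa only [add_zero] using (hcont.tendsto 0).mono_left nhdsWithin_le_nhds
  exact ge_of_tendsto hlim (Filter.eventually_of_mem self_mem_nhdsWithin perturbed)

lemma rpow_one_div_le_mul_prod_rpow_iff {q : ℝ} (hq : 0 < q) (p : ι → ℝ) {s C : ℝ} (hs : 0 ≤ s)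
    (hC : 0 ≤ C) {a : ι → ℝ} (ha : ∀ k, 0 ≤ a k) :
    s ^ (1 / q) ≤ C * ∏ k, a k ^ (1 / p k) ↔ s ≤ C ^ q * ∏ k, a k ^ (q / p k) := by
  have hprod : 0 ≤ ∏ k, a k ^ (1 / p k) :=
    Finset.prod_nonneg fun k _ => Real.rpow_nonneg (ha k) _
  rw [one_div, Real.rpow_inv_le_iff_of_pos hs (mul_nonneg hC hprod) hq, Real.mul_rpow hC hprod,
    ← Real.finsetProd_rpow _ _ fun k _ => Real.rpow_nonneg (ha k) _]
  simp only [← Real.rpow_mul (ha _), one_div_mul_eq_div]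

end WeightedMeans

section Separation

variable {X : Type*} [TopologicalSpace X]

lemma convex_setOf_forall_pos : Convex ℝ {g : C(X, ℝ) | ∀ φ, 0 < g φ} :=
  fun _ hf _ hg _ _ ha hb hab φ => convex_Ioi (0 : ℝ) (hf φ) (hg φ) ha hb hab

variable [CompactSpace X]

lemma isOpen_setOf_forall_pos : IsOpen {g : C(X, ℝ) | ∀ φ, 0 < g φ} := by
  simpa only [Set.mapsTo_univ_iff, Set.mem_Ioi] using
    ContinuousMap.isOpen_setOfPred_mapsTo (X := X) isCompact_univ (isOpen_Ioi (a := (0 : ℝ)))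

lemma exists_positiveLinearMap_nonpos {B : Set C(X, ℝ)} (hB : Convex ℝ B) (hne : B.Nonempty)
    (hneg : ∀ g ∈ B, ∃ φ, g φ ≤ 0) :
    ∃ Λ : C(X, ℝ) →ₚ[ℝ] ℝ, Λ 1 = 1 ∧ ∀ g ∈ B, Λ g ≤ 0 := by
  have hdisj : Disjoint {g : C(X, ℝ) | ∀ φ, 0 < g φ} B := Set.disjoint_left.2 fun g hg hgB =>
    let ⟨φ, hφ⟩ := hneg g hgB
    (hg φ).not_ge hφ
  obtain ⟨f, u, hf_lt, hf_ge⟩ :=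
    geometric_hahn_banach_open convex_setOf_forall_pos isOpen_setOf_forall_pos hB hdisj
  obtain ⟨b, hb⟩ := hne
  have shift : ∀ g : C(X, ℝ), 0 ≤ g → (‖b‖ + 1) * f 1 + f g < 0 := fun g hg => by
    have hmem : ∀ φ, 0 < (b + (‖b‖ + 1) • (1 : C(X, ℝ)) + g) φ := fun φ => by
      have hgφ : 0 ≤ g φ := hg φ
      have hbφ := b.neg_norm_le_apply φ
      simp only [ContinuousMap.add_apply, ContinuousMap.smul_apply, ContinuousMap.one_apply,
        smul_eq_mul, mul_one]
      linarith
    have hlt := (hf_lt _ hmem).trans_le (hf_ge b hb)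
    simp only [map_add, map_smul, smul_eq_mul] at hlt
    linarith
  have hf1 : f 1 < 0 := by
    have h0 := shift 0 le_rfl
    rw [map_zero, add_zero] at h0
    exact neg_of_mul_neg_right h0 (by positivity)
  have hf_nonpos : ∀ g : C(X, ℝ), 0 ≤ g → f g ≤ 0 := fun g hg => by
    by_contra! hfg
    have hc : 0 ≤ -((‖b‖ + 1) * f 1) / f g :=
      div_nonneg (neg_nonneg.2 (mul_nonpos_of_nonneg_of_nonpos (by positivity) hf1.le)) hfg.le
    have hlt := shift _ (smul_nonneg hc hg)
    rw [map_smul, smul_eq_mul, div_mul_cancel₀ _ hfg.ne', add_neg_cancel] at hlt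
    exact hlt.false
  have hu : 0 ≤ u := by
    by_contra! hu
    have hlt := hf_lt ((u / f 1) • 1) fun φ => by simpa using div_pos_of_neg_of_neg hu hf1
    rw [map_smul, smul_eq_mul, div_mul_cancel₀ _ hf1.ne] at hlt
    exact hlt.false
  have hinv : (f 1)⁻¹ ≤ 0 := inv_nonpos.2 hf1.le
  exact ⟨.mk₀ ((f 1)⁻¹ • f.toLinearMap) fun g hg =>
      mul_nonneg_of_nonpos_of_nonpos hinv (hf_nonpos g hg),
    inv_mul_cancel₀ hf1.ne,
    fun g hg => mul_nonpos_of_nonpos_of_nonneg hinv (hu.trans (hf_ge g hg))⟩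

variable [T2Space X] [MeasurableSpace X] [BorelSpace X]

lemma exists_isProbabilityMeasure_integral_eq (Λ : C(X, ℝ) →ₚ[ℝ] ℝ) (hΛ : Λ 1 = 1) :
    ∃ μ : Measure X, IsProbabilityMeasure μ ∧ ∀ g : C(X, ℝ), ∫ φ, g φ ∂μ = Λ g := by
  let Λc : CompactlySupportedContinuousMap X ℝ →ₚ[ℝ] ℝ := .mk₀
    { toFun := fun g => Λ g
      map_add' := fun g h => map_add Λ (g : C(X, ℝ)) h
      map_smul' := fun c g => map_smul Λ c (g : C(X, ℝ)) }
    fun g hg => map_nonneg Λ (a := (g : C(X, ℝ))) hg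
  have hint : ∀ g : C(X, ℝ), ∫ φ, g φ ∂(RealRMK.rieszMeasure Λc) = Λ g := fun g =>
    RealRMK.integral_rieszMeasure Λc (CompactlySupportedContinuousMap.continuousMapEquiv g)
  have hmass := hint 1
  simp only [ContinuousMap.one_apply, integral_const, smul_eq_mul, mul_one, hΛ, measureReal_def,
    ENNReal.toReal_eq_one_iff] at hmass
  exact ⟨RealRMK.rieszMeasure Λc, ⟨hmass⟩, hint⟩

lemma exists_isProbabilityMeasure_integral_nonpos [Nonempty X] {B : Set C(X, ℝ)}
    (hB : Convex ℝ B) (hneg : ∀ g ∈ B, ∃ φ, g φ ≤ 0) :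
    ∃ μ : Measure X, IsProbabilityMeasure μ ∧ ∀ g ∈ B, ∫ φ, g φ ∂μ ≤ 0 := by
  rcases B.eq_empty_or_nonempty with rfl | hne
  · exact ⟨Measure.dirac (Classical.arbitrary X), inferInstance, fun g hg => hg.elim⟩
  · obtain ⟨Λ, hΛ1, hΛB⟩ := exists_positiveLinearMap_nonpos hB hne hneg
    obtain ⟨μ, hμ, hint⟩ := exists_isProbabilityMeasure_integral_eq Λ hΛ1
    exact ⟨μ, hμ, fun g hg => (hint g).trans_le (hΛB g hg)⟩

end Separation

section ContinuousMap

variable {X : Type*} [TopologicalSpace X] [CompactSpace X]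

lemma integrable_continuousMap [MeasurableSpace X] [BorelSpace X] (g : C(X, ℝ)) (μ : Measure X)
    [IsFiniteMeasure μ] : Integrable g μ :=
  g.continuous.integrable_of_hasCompactSupport (.of_compactSpace g)

lemma integral_continuousMap_le_norm [MeasurableSpace X] (g : C(X, ℝ)) (μ : Measure X)
    [IsProbabilityMeasure μ] : ∫ φ, g φ ∂μ ≤ ‖g‖ := by
  simpa only [probReal_univ, mul_one] using (le_abs_self _).trans
    (norm_integral_le_of_norm_le_const (μ := μ) (.of_forall g.norm_coe_le_norm))

variable [Nonempty X]

lemma exists_apply_eq_norm {g : C(X, ℝ)} (hg : 0 ≤ g) : ∃ φ, g φ = ‖g‖ := by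
  obtain ⟨φ, -, hφ⟩ := isCompact_univ.exists_isMaxOn Set.univ_nonempty g.continuous.continuousOn
  refine ⟨φ, (g.apply_le_norm φ).antisymm (g.norm_le_of_nonempty.2 fun ψ => ?_)⟩
  exact (Real.norm_of_nonneg (show 0 ≤ g ψ from hg ψ)).trans_le (hφ (Set.mem_univ ψ))

lemma iSup_rpow_eq_norm_rpow {g : C(X, ℝ)} (hg : 0 ≤ g) {a : ℝ} (ha : 0 ≤ a) :
    ⨆ φ, g φ ^ a = ‖g‖ ^ a := by
  have hle : ∀ φ, g φ ^ a ≤ ‖g‖ ^ a := fun φ => Real.rpow_le_rpow (hg φ) (g.apply_le_norm φ) ha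
  obtain ⟨φ, hφ⟩ := exists_apply_eq_norm hg
  exact (ciSup_le hle).antisymm (le_ciSup_of_le ⟨_, Set.forall_mem_range.2 hle⟩ φ (by rw [hφ]))

end ContinuousMap

section Domination

variable {ι : Type*} [Fintype ι] {K : ι → Type*} [∀ j, TopologicalSpace (K j)] {Y : Type*}
  {w : ι → ℝ} {D : ℝ} {s : Y → ℝ} {f : ∀ j, Y → C(K j, ℝ)}

/-- The homogeneity condition of Pietsch domination, after `S` and the `R j` have been raised to
the powers `p₀` and `p j`: here `w j = p₀ / p j`, and `y'` is `y` with its `j`-th vector scaled by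
`β j ^ (1 / p j)`. Only the existence of such a `y'` matters, so `Y` carries no structure. -/
def IsScalable (w : ι → ℝ) (s : Y → ℝ) (f : ∀ j, Y → C(K j, ℝ)) : Prop :=
  ∀ y (β : ι → ℝ), (∀ j, β j ∈ Set.Icc 0 1) →
    ∃ y', (∏ j, β j ^ w j) * s y ≤ s y' ∧ ∀ j, f j y' ≤ β j • f j y

/-- The abstract summing inequality, after `S` and the `R j` have been raised to the powers `p₀`
and `p j`. The norm is the supremum over `K j`, since the `f j` will be nonnegative. -/
def IsAbstractSumming [∀ j, CompactSpace (K j)] (w : ι → ℝ) (D : ℝ) (s : Y → ℝ)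
    (f : ∀ j, Y → C(K j, ℝ)) : Prop :=
  ∀ (m : ℕ) (y : Fin m → Y), ∑ i, s (y i) ≤ D * ∏ j, ‖∑ i, f j (y i)‖ ^ w j

/-- The amount by which the domination inequality fails at `y` for the Dirac masses at the
coordinates of a point of `∏ j, K j`, with the weighted geometric mean replaced by the arithmetic
one to make the expression linear in the measures. -/
def dominationDefect (w : ι → ℝ) (D : ℝ) (s : Y → ℝ) (f : ∀ j, Y → C(K j, ℝ)) (y : Y) :
    C(∀ j, K j, ℝ) :=
  .const _ (s y) - D • ∑ j, w j • (f j y).comp ⟨Function.eval j, continuous_apply j⟩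

lemma dominationDefect_apply (y : Y) (φ : ∀ j, K j) :
    dominationDefect w D s f y φ = s y - D * ∑ j, w j * f j y (φ j) := by
  simp [dominationDefect]

lemma IsScalable.exists_smul_dominationDefect_le (hscale : IsScalable w s f)
    (hw : ∀ j, 0 ≤ w j) (hw1 : ∑ j, w j = 1) (hD : 0 ≤ D) {c : ℝ} (hc : c ∈ Set.Icc 0 1) (y : Y) :
    ∃ y', c • dominationDefect w D s f y ≤ dominationDefect w D s f y' := by
  obtain ⟨y', hs, hf⟩ := hscale y (fun _ => c) fun _ => hc
  rw [← Real.rpow_sum_of_nonneg hc.1 fun j _ => hw j, hw1, Real.rpow_one] at hs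
  refine ⟨y', fun φ => ?_⟩
  have hsum : ∑ j, w j * f j y' (φ j) ≤ c * ∑ j, w j * f j y (φ j) := by
    rw [Finset.mul_sum]
    refine Finset.sum_le_sum fun j _ => ?_
    rw [mul_left_comm]
    exact mul_le_mul_of_nonneg_left (hf j (φ j)) (hw j)
  have hDsum := mul_le_mul_of_nonneg_left hsum hD
  change c * dominationDefect w D s f y φ ≤ dominationDefect w D s f y' φ
  rw [dominationDefect_apply, dominationDefect_apply]
  linarith

section Compact

variable [∀ j, CompactSpace (K j)]

lemma IsAbstractSumming.sum_le (h : IsAbstractSumming w D s f) {κ : Type*} [Fintype κ]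
    (y : κ → Y) : ∑ i, s (y i) ≤ D * ∏ j, ‖∑ i, f j (y i)‖ ^ w j := by
  let e := (Fintype.equivFin κ).symm
  have he := h (Fintype.card κ) (y ∘ e)
  simp only [Function.comp_apply] at he
  rw [e.sum_comp fun i => s (y i)] at he
  simpa only [e.sum_comp fun i => f _ (y i)] using he

lemma IsAbstractSumming.exists_sum_dominationDefect_nonpos [∀ j, Nonempty (K j)]
    (h : IsAbstractSumming w D s f) (hf : ∀ j y, 0 ≤ f j y) (hw : ∀ j, 0 ≤ w j)
    (hw1 : ∑ j, w j = 1) (hD : 0 ≤ D) {κ : Type*} [Fintype κ] (y : κ → Y) :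
    ∃ φ, (∑ i, dominationDefect w D s f (y i)) φ ≤ 0 := by
  choose φ hφ using fun j => exists_apply_eq_norm
    (Finset.sum_nonneg (s := Finset.univ) fun i _ => hf j (y i))
  refine ⟨φ, ?_⟩
  have hsum : ∑ i, s (y i) ≤ D * ∑ i, ∑ j, w j * f j (y i) (φ j) := by
    calc ∑ i, s (y i) ≤ D * ∏ j, ‖∑ i, f j (y i)‖ ^ w j := h.sum_le y
      _ ≤ D * ∑ j, w j * ‖∑ i, f j (y i)‖ :=
        mul_le_mul_of_nonneg_left (Real.geom_mean_le_arith_mean_weighted _ _ _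
          (fun j _ => hw j) hw1 fun j _ => norm_nonneg _) hD
      _ = D * ∑ i, ∑ j, w j * f j (y i) (φ j) := by
        rw [Finset.sum_comm]
        simp only [← Finset.mul_sum, ← hφ, ContinuousMap.sum_apply]
  simpa only [ContinuousMap.sum_apply, dominationDefect_apply, Finset.sum_sub_distrib,
    ← Finset.mul_sum, sub_nonpos] using hsum

lemma IsAbstractSumming.exists_nonpos_of_mem_convexHull [∀ j, Nonempty (K j)]
    (h : IsAbstractSumming w D s f) (hscale : IsScalable w s f) (hf : ∀ j y, 0 ≤ f j y)
    (hw : ∀ j, 0 ≤ w j) (hw1 : ∑ j, w j = 1) (hD : 0 ≤ D) {g : C(∀ j, K j, ℝ)}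
    (hg : g ∈ convexHull ℝ (Set.range (dominationDefect w D s f))) : ∃ φ, g φ ≤ 0 := by
  obtain ⟨κ, _, c, z, hc, hc1, hz, rfl⟩ := mem_convexHull_iff_exists_fintype.1 hg
  choose y hy using hz
  have hc_mem : ∀ i, c i ∈ Set.Icc 0 1 := fun i =>
    ⟨hc i, hc1 ▸ Finset.single_le_sum (fun i _ => hc i) (Finset.mem_univ i)⟩
  choose y' hy' using fun i =>
    hscale.exists_smul_dominationDefect_le hw hw1 hD (hc_mem i) (y i)
  obtain ⟨φ, hφ⟩ := h.exists_sum_dominationDefect_nonpos hf hw hw1 hD y'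
  have hle : ∑ i, c i • z i ≤ ∑ i, dominationDefect w D s f (y' i) :=
    Finset.sum_le_sum fun i _ => hy i ▸ hy' i
  exact ⟨φ, (hle φ).trans hφ⟩

variable [∀ j, MeasurableSpace (K j)] [∀ j, BorelSpace (K j)]

lemma IsAbstractSumming.exists_le_arith_mean [∀ j, T2Space (K j)] [∀ j, Nonempty (K j)]
    (h : IsAbstractSumming w D s f) (hscale : IsScalable w s f) (hf : ∀ j y, 0 ≤ f j y)
    (hw : ∀ j, 0 ≤ w j) (hw1 : ∑ j, w j = 1) (hD : 0 ≤ D) :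
    ∃ μ : ∀ j, Measure (K j), (∀ j, IsProbabilityMeasure (μ j)) ∧
      ∀ y, s y ≤ D * ∑ j, w j * ∫ φ, f j y φ ∂(μ j) := by
  borelize (∀ j, K j)
  obtain ⟨μ, hμ, hμ_nonpos⟩ := exists_isProbabilityMeasure_integral_nonpos (convex_convexHull ℝ _)
    fun _ => h.exists_nonpos_of_mem_convexHull hscale hf hw hw1 hD
  have heval : ∀ j, AEMeasurable (Function.eval j : (∀ j, K j) → K j) μ := fun j =>
    (continuous_apply j).measurable.aemeasurable
  refine ⟨fun j => μ.map (Function.eval j), fun j => Measure.isProbabilityMeasure_map (heval j),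
    fun y => ?_⟩
  have hint : ∀ j, Integrable (fun φ : ∀ j, K j => w j * f j y (φ j)) μ := fun j =>
    (integrable_continuousMap ((f j y).comp ⟨Function.eval j, continuous_apply j⟩) μ).const_mul _
  have hdefect := hμ_nonpos _ (subset_convexHull ℝ _ (Set.mem_range_self y))
  simp only [dominationDefect_apply] at hdefect
  rw [integral_sub (integrable_const _) ((integrable_finsetSum _ fun j _ => hint j).const_mul _),
    integral_const_mul, integral_finsetSum _ fun j _ => hint j, integral_const, probReal_univ,
    one_smul, sub_nonpos] at hdefect
  simpa only [integral_map (heval _) (f _ y).continuous.measurable.aestronglyMeasurable,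
    integral_const_mul] using hdefect

theorem IsAbstractSumming.exists_le_prod_rpow_integral [∀ j, T2Space (K j)]
    [∀ j, Nonempty (K j)] (h : IsAbstractSumming w D s f) (hscale : IsScalable w s f)
    (hf : ∀ j y, 0 ≤ f j y) (hw : ∀ j, 0 ≤ w j) (hw1 : ∑ j, w j = 1) (hD : 0 ≤ D) :
    ∃ μ : ∀ j, Measure (K j), (∀ j, IsProbabilityMeasure (μ j)) ∧
      ∀ y, s y ≤ D * ∏ j, (∫ φ, f j y φ ∂(μ j)) ^ w j := by
  obtain ⟨μ, hμ, hle⟩ := h.exists_le_arith_mean hscale hf hw hw1 hD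
  refine ⟨μ, hμ, fun y => le_mul_prod_rpow_of_forall_prod_rpow_mul_le hw hw1 hD
    (fun j => integral_nonneg (hf j y)) fun β hβ => ?_⟩
  obtain ⟨y', hs, hf'⟩ := hscale y β hβ
  refine (hs.trans (hle y')).trans (mul_le_mul_of_nonneg_left ?_ hD)
  refine Finset.sum_le_sum fun j _ => mul_le_mul_of_nonneg_left ?_ (hw j)
  rw [← integral_const_mul]
  exact integral_mono (integrable_continuousMap _ _)
    ((integrable_continuousMap _ _).const_mul _) (hf' j)

theorem isAbstractSumming_of_le_prod_rpow_integral {μ : ∀ j, Measure (K j)}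
    [∀ j, IsProbabilityMeasure (μ j)] (hf : ∀ j y, 0 ≤ f j y) (hw : ∀ j, 0 ≤ w j)
    (hw1 : ∑ j, w j = 1) (hD : 0 ≤ D)
    (h : ∀ y, s y ≤ D * ∏ j, (∫ φ, f j y φ ∂(μ j)) ^ w j) : IsAbstractSumming w D s f := by
  intro m y
  have hint_nonneg : ∀ i j, 0 ≤ ∫ φ, f j (y i) φ ∂(μ j) := fun i j =>
    integral_nonneg (hf j (y i))
  have hsum_nonneg : ∀ j, 0 ≤ ∑ i, ∫ φ, f j (y i) φ ∂(μ j) := fun j =>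
    Finset.sum_nonneg fun i _ => hint_nonneg i j
  have hint_le : ∀ j, ∑ i, ∫ φ, f j (y i) φ ∂(μ j) ≤ ‖∑ i, f j (y i)‖ := fun j => by
    rw [← integral_finsetSum _ fun i _ => integrable_continuousMap (f j (y i)) (μ j)]
    simpa only [ContinuousMap.sum_apply] using
      integral_continuousMap_le_norm (∑ i, f j (y i)) (μ j)
  calc ∑ i, s (y i) ≤ D * ∑ i, ∏ j, (∫ φ, f j (y i) φ ∂(μ j)) ^ w j := by
        rw [Finset.mul_sum]
        exact Finset.sum_le_sum fun i _ => h (y i)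
    _ ≤ D * ∏ j, (∑ i, ∫ φ, f j (y i) φ ∂(μ j)) ^ w j :=
        mul_le_mul_of_nonneg_left (sum_prod_rpow_le_prod_sum_rpow hw hw1 hint_nonneg) hD
    _ ≤ D * ∏ j, ‖∑ i, f j (y i)‖ ^ w j := by
        refine mul_le_mul_of_nonneg_left (Finset.prod_le_prod (fun j _ => ?_) fun j _ => ?_) hD
        · exact Real.rpow_nonneg (hsum_nonneg j) _
        · exact Real.rpow_le_rpow (hsum_nonneg j) (hint_le j) (hw j)

end Compact

end Domination

section Exponents

variable {ι : Type*} {K : ι → Type*} [∀ j, TopologicalSpace (K j)] {X : Type*} {G : ι → Type*}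
  {R : ∀ j, K j → X → G j → ℝ} {S : X → (∀ j, G j) → ℝ} {p : ι → ℝ} {p₀ : ℝ}

/-- The function `φ ↦ R j φ x (b j) ^ p j` attached to a pair `(x, b)`: these, with the weights
`p₀ / p j`, reduce the domination theorem to exponents equal to `1`. -/
noncomputable def rpowKernel (R : ∀ j, K j → X → G j → ℝ)
    (hR : ∀ j x b, Continuous fun φ : K j => R j φ x b) (p : ι → ℝ) (hp : ∀ j, 0 < p j)
    (j : ι) (y : X × ∀ j, G j) : C(K j, ℝ) :=
  ⟨fun φ => R j φ y.1 (y.2 j) ^ p j, (hR j y.1 (y.2 j)).rpow_const fun _ => Or.inr (hp j).le⟩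

variable (hRcont : ∀ j x b, Continuous fun φ : K j => R j φ x b) (hp : ∀ j, 0 < p j)

lemma rpowKernel_nonneg (hRnn : ∀ j φ x b, 0 ≤ R j φ x b) (j : ι) (y : X × ∀ j, G j) :
    0 ≤ rpowKernel R hRcont p hp j y :=
  fun φ => Real.rpow_nonneg (hRnn j φ y.1 (y.2 j)) _

variable [Fintype ι]

lemma isScalable_rpowKernel [∀ j, SMul ℝ (G j)] (hRnn : ∀ j φ x b, 0 ≤ R j φ x b)
    (hSnn : ∀ x b, 0 ≤ S x b) (hp₀ : 0 < p₀)
    (hRhom : ∀ j (φ : K j) x (η : ℝ), 0 ≤ η → η ≤ 1 →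
      ∀ b : G j, R j φ x (η • b) ≤ η * R j φ x b)
    (hShom : ∀ x (α : ι → ℝ), (∀ j, 0 ≤ α j ∧ α j ≤ 1) →
      ∀ b : ∀ j, G j, (∏ j, α j) * S x b ≤ S x (fun j => α j • b j)) :
    IsScalable (fun j => p₀ / p j) (fun y => S y.1 y.2 ^ p₀) (rpowKernel R hRcont p hp) := by
  rintro ⟨x, b⟩ β hβ
  have hα : ∀ j, 0 ≤ β j ^ (1 / p j) ∧ β j ^ (1 / p j) ≤ 1 := fun j =>
    have hp_inv := one_div_nonneg.2 (hp j).le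
    ⟨Real.rpow_nonneg (hβ j).1 _, Real.rpow_le_one (hβ j).1 (hβ j).2 hp_inv⟩
  refine ⟨(x, fun j => β j ^ (1 / p j) • b j), ?_, fun j φ => ?_⟩
  · have hprod : 0 ≤ ∏ j, β j ^ (1 / p j) := Finset.prod_nonneg fun j _ => (hα j).1
    calc (∏ j, β j ^ (p₀ / p j)) * S x b ^ p₀ = ((∏ j, β j ^ (1 / p j)) * S x b) ^ p₀ := by
          rw [Real.mul_rpow hprod (hSnn x b), ← Real.finsetProd_rpow _ _ fun j _ => (hα j).1]
          simp only [← Real.rpow_mul (hβ _).1, one_div_mul_eq_div]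
      _ ≤ S x (fun j => β j ^ (1 / p j) • b j) ^ p₀ :=
          Real.rpow_le_rpow (mul_nonneg hprod (hSnn x b)) (hShom x _ hα b) hp₀.le
  · calc R j φ x (β j ^ (1 / p j) • b j) ^ p j ≤ (β j ^ (1 / p j) * R j φ x (b j)) ^ p j :=
          Real.rpow_le_rpow (hRnn _ _ _ _) (hRhom j φ x _ (hα j).1 (hα j).2 (b j)) (hp j).le
      _ = β j * R j φ x (b j) ^ p j := by
          rw [Real.mul_rpow (hα j).1 (hRnn _ _ _ _), ← Real.rpow_mul (hβ j).1,
            one_div_mul_cancel (hp j).ne', Real.rpow_one]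

lemma isAbstractSumming_rpowKernel_iff [∀ j, CompactSpace (K j)] [∀ j, Nonempty (K j)]
    (hRnn : ∀ j φ x b, 0 ≤ R j φ x b) (hSnn : ∀ x b, 0 ≤ S x b) (hp₀ : 0 < p₀) {C : ℝ}
    (hC : 0 ≤ C) :
    IsAbstractSumming (fun j => p₀ / p j) (C ^ p₀) (fun y => S y.1 y.2 ^ p₀)
        (rpowKernel R hRcont p hp) ↔
      ∀ (m : ℕ) (x : Fin m → X) (b : Fin m → ∀ j, G j),
        (∑ i, S (x i) (b i) ^ p₀) ^ (1 / p₀) ≤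
          C * ∏ k, ⨆ φ : K k, (∑ i, R k φ (x i) (b i k) ^ p k) ^ (1 / p k) := by
  have hiSup : ∀ {m : ℕ} (y : Fin m → X × ∀ j, G j) (k : ι),
      ⨆ φ : K k, (∑ i, R k φ (y i).1 ((y i).2 k) ^ p k) ^ (1 / p k) =
        ‖∑ i, rpowKernel R hRcont p hp k (y i)‖ ^ (1 / p k) := fun y k => by
    rw [← iSup_rpow_eq_norm_rpow
      (Finset.sum_nonneg fun i _ => rpowKernel_nonneg hRcont hp hRnn k (y i))
      (one_div_nonneg.2 (hp k).le)]
    simp only [ContinuousMap.sum_apply, rpowKernel, ContinuousMap.coe_mk]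
  have hiff : ∀ {m : ℕ} (y : Fin m → X × ∀ j, G j),
      (∑ i, S (y i).1 (y i).2 ^ p₀) ^ (1 / p₀) ≤
          C * ∏ k, ⨆ φ : K k, (∑ i, R k φ (y i).1 ((y i).2 k) ^ p k) ^ (1 / p k) ↔
        ∑ i, S (y i).1 (y i).2 ^ p₀ ≤
          C ^ p₀ * ∏ k, ‖∑ i, rpowKernel R hRcont p hp k (y i)‖ ^ (p₀ / p k) := fun y => by
    simp only [hiSup]
    exact rpow_one_div_le_mul_prod_rpow_iff hp₀ p
      (Finset.sum_nonneg fun i _ => Real.rpow_nonneg (hSnn _ _) _) hC fun k => norm_nonneg _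
  exact ⟨fun h m x b => (hiff fun i => (x i, b i)).2 (h m _),
    fun h m y => (hiff y).1 (h m (fun i => (y i).1) fun i => (y i).2)⟩

lemma rpow_le_prod_integral_rpowKernel_iff [∀ j, MeasurableSpace (K j)]
    (hRnn : ∀ j φ x b, 0 ≤ R j φ x b) (hSnn : ∀ x b, 0 ≤ S x b) (hp₀ : 0 < p₀) {C : ℝ}
    (hC : 0 ≤ C) (μ : ∀ j, Measure (K j)) (y : X × ∀ j, G j) :
    S y.1 y.2 ^ p₀ ≤
        C ^ p₀ * ∏ j, (∫ φ, rpowKernel R hRcont p hp j y φ ∂(μ j)) ^ (p₀ / p j) ↔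
      S y.1 y.2 ≤ C * ∏ j, (∫ φ, R j φ y.1 (y.2 j) ^ p j ∂(μ j)) ^ (1 / p j) := by
  have hint : ∀ j, 0 ≤ ∫ φ, rpowKernel R hRcont p hp j y φ ∂(μ j) := fun j =>
    integral_nonneg (rpowKernel_nonneg hRcont hp hRnn j y)
  rw [← rpow_one_div_le_mul_prod_rpow_iff hp₀ p (Real.rpow_nonneg (hSnn _ _) _) hC hint, one_div,
    Real.rpow_rpow_inv (hSnn _ _) hp₀.ne']
  rfl

end Exponents

theorem stmt11_general {ι : Type*} [Fintype ι]
    {K : ι → Type*} [∀ j, TopologicalSpace (K j)] [∀ j, CompactSpace (K j)]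
    [∀ j, T2Space (K j)] [∀ j, Nonempty (K j)]
    [∀ j, MeasurableSpace (K j)] [∀ j, BorelSpace (K j)]
    {G : ι → Type*} [∀ j, SMul ℝ (G j)] {X : Type*}
    (R : ∀ j, K j → X → G j → ℝ) (S : X → (∀ j, G j) → ℝ)
    (hRnn : ∀ j φ x b, 0 ≤ R j φ x b) (hSnn : ∀ x b, 0 ≤ S x b)
    (hRcont : ∀ j x b, Continuous fun φ : K j => R j φ x b)
    (hRhom : ∀ j (φ : K j) x (η : ℝ), 0 ≤ η → η ≤ 1 →
      ∀ b : G j, R j φ x (η • b) ≤ η * R j φ x b)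
    (hShom : ∀ x (α : ι → ℝ), (∀ j, 0 ≤ α j ∧ α j ≤ 1) →
      ∀ b : ∀ j, G j, (∏ j, α j) * S x b ≤ S x (fun j => α j • b j))
    (p : ι → ℝ) (hp : ∀ j, 0 < p j)
    (p₀ : ℝ) (hp₀ : 0 < p₀) (hp₀eq : 1 / p₀ = ∑ j, 1 / p j) (C : ℝ) (hC : 0 ≤ C) :
    (∀ (m : ℕ) (x : Fin m → X) (b : Fin m → ∀ j, G j),
        (∑ i, S (x i) (b i) ^ p₀) ^ (1 / p₀) ≤
          C * ∏ k, ⨆ φ : K k, (∑ i, R k φ (x i) (b i k) ^ p k) ^ (1 / p k)) ↔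
    (∃ μ : ∀ j, Measure (K j), (∀ j, IsProbabilityMeasure (μ j)) ∧
        ∀ (x : X) (b : ∀ j, G j),
          S x b ≤ C * ∏ j, (∫ φ, R j φ x (b j) ^ p j ∂(μ j)) ^ (1 / p j)) := by
  have hw : ∀ j, 0 ≤ p₀ / p j := fun j => (div_pos hp₀ (hp j)).le
  have hw1 : ∑ j, p₀ / p j = 1 := by
    simp only [← mul_one_div p₀ (p _), ← Finset.mul_sum, ← hp₀eq, mul_one_div_cancel hp₀.ne']
  have hD : 0 ≤ C ^ p₀ := Real.rpow_nonneg hC _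
  have hf := rpowKernel_nonneg hRcont hp hRnn
  have hiff := rpow_le_prod_integral_rpowKernel_iff hRcont hp hRnn hSnn hp₀ hC
  rw [← isAbstractSumming_rpowKernel_iff hRcont hp hRnn hSnn hp₀ hC]
  constructor
  · intro h
    obtain ⟨μ, hμ, hle⟩ := h.exists_le_prod_rpow_integral
      (isScalable_rpowKernel hRcont hp hRnn hSnn hp₀ hRhom hShom) hf hw hw1 hD
    exact ⟨μ, hμ, fun x b => (hiff μ (x, b)).1 (hle (x, b))⟩
  · rintro ⟨μ, hμ, hle⟩
    exact isAbstractSumming_of_le_prod_rpow_integral hf hw hw1 hD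
      fun y => (hiff μ y).2 (hle y.1 y.2)

/-- **Full general Pietsch Domination Theorem.** With compact Hausdorff
spaces `K₁, …, K_t`, Banach spaces `G₁, …, G_t`, nonempty sets `E₁, …, E_r` and maps
`S`, `R₁, …, R_t` satisfying the continuity and homogeneity conditions (i), (ii), and
`0 < p₁, …, p_t < ∞` with `1/p = 1/p₁ + ⋯ + 1/p_t`, the map `S` satisfies the abstract
`(p₁,…,p_t)`-summing inequality if and only if there are `C > 0` and Borel probability
measures `μⱼ` on `Kⱼ` with
`S(x, b⁽¹⁾, …, b⁽ᵗ⁾) ≤ C ∏ⱼ (∫_{Kⱼ} Rⱼ(φ, x, b⁽ʲ⁾)^{pⱼ} dμⱼ)^{1/pⱼ}`. -/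
theorem stmt11 {t r : ℕ}
    {K : Fin t → Type*} [∀ j, TopologicalSpace (K j)] [∀ j, CompactSpace (K j)]
    [∀ j, T2Space (K j)] [∀ j, Nonempty (K j)]
    [∀ j, MeasurableSpace (K j)] [∀ j, BorelSpace (K j)]
    {G : Fin t → Type*} [∀ j, NormedAddCommGroup (G j)] [∀ j, NormedSpace ℝ (G j)]
    [∀ j, CompleteSpace (G j)]
    {E : Fin r → Type*} [∀ l, Nonempty (E l)]
    (R : ∀ j, K j → (∀ l, E l) → G j → ℝ)
    (S : (∀ l, E l) → (∀ j, G j) → ℝ)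
    (hRnn : ∀ j φ x b, 0 ≤ R j φ x b) (hSnn : ∀ x b, 0 ≤ S x b)
    (hRcont : ∀ j x b, Continuous fun φ : K j => R j φ x b)
    (hRhom : ∀ j (φ : K j) x (η : ℝ), 0 ≤ η → η ≤ 1 →
      ∀ b : G j, R j φ x (η • b) ≤ η * R j φ x b)
    (hShom : ∀ x (α : Fin t → ℝ), (∀ j, 0 ≤ α j ∧ α j ≤ 1) →
      ∀ b : ∀ j, G j, (∏ j, α j) * S x b ≤ S x (fun j => α j • b j))
    (p : Fin t → ℝ) (hp : ∀ j, 0 < p j)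
    (p₀ : ℝ) (hp₀ : 0 < p₀) (hp₀eq : 1 / p₀ = ∑ j, 1 / p j) :
    (∃ C : ℝ, 0 < C ∧ ∀ (m : ℕ) (x : Fin m → ∀ l, E l) (b : Fin m → ∀ j, G j),
        (∑ i, S (x i) (b i) ^ p₀) ^ (1 / p₀) ≤
          C * ∏ k, ⨆ φ : K k, (∑ i, R k φ (x i) (b i k) ^ p k) ^ (1 / p k)) ↔
    (∃ C : ℝ, 0 < C ∧ ∃ μ : ∀ j, Measure (K j),
        (∀ j, IsProbabilityMeasure (μ j)) ∧
        ∀ (x : ∀ l, E l) (b : ∀ j, G j),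
          S x b ≤ C * ∏ j, (∫ φ, R j φ x (b j) ^ p j ∂(μ j)) ^ (1 / p j)) :=
  exists_congr fun C => and_congr_right fun hC =>
    stmt11_general R S hRnn hSnn hRcont hRhom hShom p hp p₀ hp₀ hp₀eq C hC.le
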